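/- arXiv:2506.16253 — 2 statements merged into one kernel-verified Lean document; each statement's English description precedes it below -/
import Mathlib

section
/- For every integer K ≥ 1 there exists a real number β such that β is the largest real root of the K-th probabilist's Hermite polynomial He_K (He_K(β) = 0 and every real root of He_K is ≤ β), and the sequence T ↦ (V T 0 − T)/√T, indexed by natural numbers T, converges to β as T → ∞. -/
open scoped BigOperators

noncomputable section

def simplex (K : ℕ) : Set (Fin K → ℝ) :=
  {q | (∀ k, 0 ≤ q k) ∧ ∑ k, q k = 1}

def simplexInt (K : ℕ) : Set (Fin K → ℝ) :=
  {r | (∀ k, 0 < r k) ∧ ∑ k, r k = 1}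

noncomputable def V (K : ℕ) : ℕ → (Fin K → ℝ) → ℝ
  | 0, s => ⨆ k, s k
  | H + 1, s =>
      sInf ((fun r : Fin K → ℝ =>
        sSup ((fun q : Fin K → ℝ => V K H (fun k => s k + q k / r k)) '' simplex K))
        '' simplexInt K)

/-- The `K`-th probabilist's Hermite polynomial, evaluated at a real `x`. -/
noncomputable def He (K : ℕ) (x : ℝ) : ℝ := Polynomial.aeval x (Polynomial.hermite K)

/-!
Each continuation value is convex, so an adversary does no better than to bet the whole stake on one
outcome `k`. A betting round then asks for odds `a k > 0` with `∑ k, (a k)⁻¹ = 1` that minimize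
`max_k f (s + a k • e_k)`, and odds for which all these values are equal to some `L` are optimal.

Write `P_s = (1 - D) ^ H ∏ k, (X - s k)`, and suppose that the largest root of `P_s` is `f s` for
every `s`. Since `P_s` is affine in each `s k`, the equations `P_{s + a k • e_k}(L) = 0` determine
`∂P_s(L)/∂s_k = -P_s(L) / a k`. The operator `D` acts on `P_s` as `-∑ k, ∂/∂s_k`, so
`(P_s - P_s')(L) = P_s(L) * (1 - ∑ k, (a k)⁻¹) = 0`. By induction `V K H s` is the largest root of
`(1 - D) ^ H ∏ k, (X - s k)`.

At `s = 0` this is the polynomial `(1 - D) ^ T X ^ K`, up to scaling a Laguerre polynomial. After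
recentering at `T` and rescaling by `√T`, its three-term recurrence converges to that of the Hermite
polynomials. Both families are Appell sequences, in which a point where all terms of index at most
`n` are positive bounds the roots of the `n`-th term from above, so the largest roots converge too.
-/

open Filter Finset Polynomial Topology

/-! ### Backward induction preserves convexity -/

theorem iSup_stdSimplex_eq_iSup {ι E : Type*} [Fintype ι] [Nonempty ι] [AddCommGroup E]
    [Module ℝ E] {f : E → ℝ} (hf : ConvexOn ℝ Set.univ f) (v : ι → E) :
    ⨆ q : stdSimplex ℝ ι, f (∑ k, q.1 k • v k) = ⨆ k, f (v k) := by
  classical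
  have hle (q : stdSimplex ℝ ι) : f (∑ k, q.1 k • v k) ≤ ⨆ k, f (v k) := by
    calc f (∑ k, q.1 k • v k) ≤ ∑ k, q.1 k • f (v k) :=
          hf.map_sum_le (fun k _ => q.2.1 k) q.2.2 fun k _ => Set.mem_univ _
      _ ≤ ∑ k, q.1 k • ⨆ k, f (v k) := by
          gcongr with k
          · exact q.2.1 k
          · exact le_ciSup (Set.finite_range fun k => f (v k)).bddAbove k
      _ = ⨆ k, f (v k) := by rw [← sum_smul, q.2.2, one_smul]
  refine (ciSup_le hle).antisymm (ciSup_le fun k => ?_)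
  refine le_ciSup_of_le ⟨_, Set.forall_mem_range.2 hle⟩ ⟨_, single_mem_stdSimplex ℝ k⟩ ?_
  simp [Pi.single_apply]

theorem convexOn_inv_Ioi {𝕜 : Type*} [Field 𝕜] [LinearOrder 𝕜] [IsStrictOrderedRing 𝕜] :
    ConvexOn 𝕜 (Set.Ioi 0) fun x : 𝕜 => x⁻¹ := by
  simpa using convexOn_zpow (𝕜 := 𝕜) (-1)

theorem convex_simplexInt (K : ℕ) : Convex ℝ (simplexInt K) := by
  have h : simplexInt K = Set.univ.pi (fun _ => Set.Ioi 0) ∩ stdSimplex ℝ (Fin K) := by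
    ext r
    simp only [simplexInt, stdSimplex, Set.mem_inter_iff, Set.mem_univ_pi, Set.mem_Ioi,
      Set.mem_ofPred_eq]
    exact ⟨fun h => ⟨h.1, fun k => (h.1 k).le, h.2⟩, fun h => ⟨h.1, h.2.2⟩⟩
  rw [h]
  exact (convex_pi fun _ _ => convex_Ioi 0).inter (convex_stdSimplex ℝ _)

theorem simplexInt_nonempty (K : ℕ) [NeZero K] : (simplexInt K).Nonempty :=
  have hK : (0 : ℝ) < K := Nat.cast_pos.2 (NeZero.pos K)
  ⟨fun _ => (K : ℝ)⁻¹, fun _ => inv_pos.2 hK, by simp [hK.ne']⟩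

/-- The properties of the value functions `V K H` that backward induction preserves. In financial
terms, they are the convex risk measures on losses that dominate the loss on each outcome. -/
structure IsValueFunction {ι : Type*} (f : (ι → ℝ) → ℝ) : Prop where
  monotone : Monotone f
  map_add_const : ∀ s c, f (s + Function.const ι c) = f s + c
  apply_le : ∀ s k, s k ≤ f s
  convexOn : ConvexOn ℝ Set.univ f

/-- The value of a betting round in which the whole stake is bet on a single outcome, when `f` is
the value after the round. By convexity of `f` no other bet is worse for the bookmaker. -/
def bettingStep {K : ℕ} (f : (Fin K → ℝ) → ℝ) (s : Fin K → ℝ) : ℝ :=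
  ⨅ r : simplexInt K, ⨆ k, f (s + Pi.single k (r.1 k)⁻¹)

theorem isValueFunction_iSup {ι : Type*} [Finite ι] [Nonempty ι] :
    IsValueFunction fun s : ι → ℝ => ⨆ k, s k where
  monotone s t hst := ciSup_mono (Set.finite_range t).bddAbove hst
  map_add_const s c := (ciSup_add (Set.finite_range s).bddAbove c).symm
  apply_le s k := le_ciSup (Set.finite_range s).bddAbove k
  convexOn := by
    refine ⟨convex_univ, fun s _ t _ a b ha hb _ => ciSup_le fun k => ?_⟩
    simp only [Pi.add_apply, Pi.smul_apply]
    gcongr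
    · exact le_ciSup (Set.finite_range s).bddAbove k
    · exact le_ciSup (Set.finite_range t).bddAbove k

namespace IsValueFunction

section Game

variable {K : ℕ} [NeZero K] {f : (Fin K → ℝ) → ℝ}

theorem bettingStep_lt_iff (hf : IsValueFunction f) {s : Fin K → ℝ} {L : ℝ} :
    bettingStep f s < L ↔ ∃ r ∈ simplexInt K, ∀ k, f (s + Pi.single k (r k)⁻¹) < L := by
  have : Nonempty (simplexInt K) := (simplexInt_nonempty K).to_subtype
  have hbdd : BddBelow (Set.range fun r : simplexInt K => ⨆ k, f (s + Pi.single k (r.1 k)⁻¹)) := by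
    refine ⟨f s, Set.forall_mem_range.2 fun r => ?_⟩
    refine le_ciSup_of_le (Set.finite_range _).bddAbove 0 (hf.monotone ?_)
    exact le_add_of_nonneg_right (Pi.single_nonneg.2 (inv_pos.2 (r.2.1 0)).le)
  have hsup (g : Fin K → ℝ) : ⨆ k, g k < L ↔ ∀ k, g k < L := by
    obtain ⟨k, hk⟩ := exists_eq_ciSup_of_finite (f := g)
    exact ⟨fun h k => (le_ciSup (Set.finite_range g).bddAbove k).trans_lt h, fun h => hk ▸ h k⟩
  simp only [bettingStep, ciInf_lt_iff hbdd, hsup, Subtype.exists, exists_prop]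

theorem bettingStep_map_add_const (hf : IsValueFunction f) (s : Fin K → ℝ) (c : ℝ) :
    bettingStep f (s + Function.const _ c) = bettingStep f s + c := by
  refine eq_of_forall_gt_iff fun L => ?_
  simp only [← lt_sub_iff_add_lt, hf.bettingStep_lt_iff, add_right_comm s (Function.const _ c),
    hf.map_add_const]

theorem convexOn_bettingStep (hf : IsValueFunction f) : ConvexOn ℝ Set.univ (bettingStep f) := by
  refine ⟨convex_univ, fun s _ t _ a b ha hb hab => le_of_forall_pos_lt_add fun ε hε => ?_⟩
  obtain ⟨r, hr, hsr⟩ := hf.bettingStep_lt_iff.1 (lt_add_of_pos_right (bettingStep f s) hε)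
  obtain ⟨u, hu, htu⟩ := hf.bettingStep_lt_iff.1 (lt_add_of_pos_right (bettingStep f t) hε)
  refine hf.bettingStep_lt_iff.2 ⟨a • r + b • u, convex_simplexInt K hr hu ha hb hab, fun k => ?_⟩
  have hodds : a • s + b • t + Pi.single k ((a • r + b • u) k)⁻¹ ≤
      a • (s + Pi.single k (r k)⁻¹) + b • (t + Pi.single k (u k)⁻¹) := by
    rw [smul_add, smul_add, add_add_add_comm, ← Pi.single_smul, ← Pi.single_smul, ← Pi.single_add]
    gcongr
    exact convexOn_inv_Ioi.2 (hr.1 k) (hu.1 k) ha hb hab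
  have hbet := (hf.convexOn.convex_strict_epigraph (x := (_, _)) ⟨Set.mem_univ _, hsr k⟩
    (y := (_, _)) ⟨Set.mem_univ _, htu k⟩ ha hb hab).2
  refine (hf.monotone hodds).trans_lt (hbet.trans_eq ?_)
  simp only [Prod.snd_add, Prod.smul_snd, smul_add]
  rw [add_add_add_comm, ← add_smul, hab, one_smul]

theorem isValueFunction_bettingStep (hf : IsValueFunction f) : IsValueFunction (bettingStep f) where
  monotone s t hst := le_of_forall_gt fun L hL => by
    obtain ⟨r, hr, h⟩ := hf.bettingStep_lt_iff.1 hL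
    exact hf.bettingStep_lt_iff.2
      ⟨r, hr, fun k => (hf.monotone (add_le_add_left hst _)).trans_lt (h k)⟩
  map_add_const := hf.bettingStep_map_add_const
  apply_le s k := le_of_forall_gt fun L hL => by
    obtain ⟨r, hr, h⟩ := hf.bettingStep_lt_iff.1 hL
    calc s k ≤ s k + (r k)⁻¹ := le_add_of_nonneg_right (inv_pos.2 (hr.1 k)).le
      _ = (s + Pi.single k (r k)⁻¹ : Fin K → ℝ) k := by simp
      _ ≤ f (s + Pi.single k (r k)⁻¹) := hf.apply_le _ k
      _ < L := h k
  convexOn := hf.convexOn_bettingStep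

theorem bettingStep_eq_of_equalizing (hf : IsValueFunction f) {s a : Fin K → ℝ} {L : ℝ}
    (ha : ∀ k, 0 < a k) (hsum : ∑ k, (a k)⁻¹ = 1) (hL : ∀ k, f (s + Pi.single k (a k)) = L) :
    bettingStep f s = L := by
  refine eq_of_forall_gt_iff fun M => hf.bettingStep_lt_iff.trans ⟨?_, fun hM => ?_⟩
  · rintro ⟨r, hr, h⟩
    obtain ⟨k, -, hk⟩ : ∃ k ∈ univ, r k ≤ (a k)⁻¹ :=
      exists_le_of_sum_le univ_nonempty (by rw [hr.2, hsum])
    calc L = f (s + Pi.single k (a k)) := (hL k).symm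
      _ ≤ f (s + Pi.single k (r k)⁻¹) := hf.monotone <| by
          gcongr
          exact (le_inv_comm₀ (ha k) (hr.1 k)).2 hk
      _ < M := h k
  · exact ⟨fun k => (a k)⁻¹, ⟨fun k => inv_pos.2 (ha k), hsum⟩, fun k => by simpa [hL k]⟩

end Game

theorem map_add_single_le {ι : Type*} [DecidableEq ι] {f : (ι → ℝ) → ℝ}
    (hf : IsValueFunction f) (s : ι → ℝ) (k : ι) {a : ℝ} (ha : 0 ≤ a) :
    f (s + Pi.single k a) ≤ f s + a := by
  rw [← hf.map_add_const]
  refine hf.monotone (add_le_add_right (fun j => ?_) s)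
  rw [Pi.single_apply]
  split_ifs <;> simp [ha]

section Continuity

variable {ι : Type*} [Finite ι] {f : (ι → ℝ) → ℝ}

theorem continuous (hf : IsValueFunction f) : Continuous f := by
  have := Fintype.ofFinite ι
  refine (LipschitzWith.of_le_add fun x y => ?_).continuous
  rw [← hf.map_add_const]
  refine hf.monotone fun k => sub_le_iff_le_add'.1 ?_
  exact (le_abs_self _).trans (dist_le_pi_dist x y k)

variable [DecidableEq ι]

theorem exists_map_add_single_eq (hf : IsValueFunction f) {s : ι → ℝ} {x : ℝ} (hx : f s < x)
    (k : ι) : ∃ a, 0 < a ∧ f (s + Pi.single k a) = x := by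
  have hcont : Continuous fun a : ℝ => f (s + Pi.single k a) :=
    hf.continuous.comp (continuous_const.add (continuous_single (A := fun _ => ℝ) k))
  have hmax : x ≤ f (s + Pi.single k (x - s k)) := by
    have := hf.apply_le (s + Pi.single k (x - s k)) k
    rwa [Pi.add_apply, Pi.single_eq_same, add_sub_cancel] at this
  obtain ⟨a, ha, hax⟩ := intermediate_value_Icc (sub_nonneg.2 ((hf.apply_le s k).trans hx.le))
    hcont.continuousOn ⟨by simpa using hx.le, hmax⟩
  refine ⟨a, ha.1.lt_of_ne' ?_, hax⟩
  rintro rfl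
  simp [hx.ne] at hax

end Continuity

end IsValueFunction

theorem V_succ_of_convexOn {K : ℕ} [NeZero K] {H : ℕ} (hconv : ConvexOn ℝ Set.univ (V K H)) :
    V K (H + 1) = bettingStep (V K H) := by
  have hmix (s r : Fin K → ℝ) (q : simplex K) :
      (fun k => s k + q.1 k / r k) = ∑ k, q.1 k • (s + Pi.single k (r k)⁻¹) := by
    simp only [smul_add, sum_add_distrib, ← sum_smul, q.2.2, one_smul]
    ext j
    simp [Pi.single_apply, div_eq_mul_inv]
  funext s
  simp only [V, bettingStep, sInf_image', sSup_image', hmix]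
  exact iInf_congr fun r => iSup_stdSimplex_eq_iSup hconv _

theorem isValueFunction_V (K : ℕ) [NeZero K] (H : ℕ) : IsValueFunction (V K H) := by
  induction H with
  | zero => exact isValueFunction_iSup
  | succ H ih => exact V_succ_of_convexOn ih.convexOn ▸ ih.isValueFunction_bettingStep

/-! ### The value as the largest root of a polynomial -/

/-- `x` is a root of `g`, and `g` is positive to the right of `x`; in particular, `x` is the largest
root of `g`. -/
structure IsTopRoot (g : ℝ → ℝ) (x : ℝ) : Prop where
  eq_zero : g x = 0
  pos_of_lt : ∀ ⦃y⦄, x < y → 0 < g y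

theorem IsTopRoot.le_of_eq_zero {g : ℝ → ℝ} {x y : ℝ} (h : IsTopRoot g x) (hy : g y = 0) :
    y ≤ x :=
  not_lt.1 fun hxy => (h.pos_of_lt hxy).ne' hy

section Polynomial

variable {ι R : Type*} [CommRing R]

/-- The operator `1 - D` on polynomials, where `D` is the derivative. -/
def oneSubDeriv : Module.End R R[X] := 1 - derivative

theorem oneSubDeriv_apply (p : R[X]) : oneSubDeriv p = p - derivative p := rfl

theorem derivative_oneSubDeriv_pow (T : ℕ) (p : R[X]) :
    derivative ((oneSubDeriv ^ T) p) = (oneSubDeriv ^ T) (derivative p) := by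
  have h : Commute (derivative : Module.End R R[X]) (oneSubDeriv ^ T) :=
    ((Commute.one_right _).sub_right (Commute.refl _)).pow_right T
  exact LinearMap.congr_fun h.eq p

theorem nodal_add_single [DecidableEq ι] {t : Finset ι} {k : ι} (hk : k ∈ t) (s : ι → R) (a : R) :
    Lagrange.nodal t (s + Pi.single k a) =
      Lagrange.nodal t s - a • Lagrange.nodal (t.erase k) s := by
  have herase : Lagrange.nodal (t.erase k) (s + Pi.single k a) = Lagrange.nodal (t.erase k) s :=
    prod_congr rfl fun j hj => by simp [ne_of_mem_erase hj]
  rw [Lagrange.nodal_eq_mul_nodal_erase hk, Lagrange.nodal_eq_mul_nodal_erase (v := s) hk, herase,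
    Pi.add_apply, Pi.single_eq_same, C_add, smul_eq_C_mul]
  ring

variable [Fintype ι]

/-- The polynomial `(1 - D) ^ H ∏ k, (X - s k)`, whose largest root is the value `V K H s`. -/
def valuePoly (H : ℕ) (s : ι → R) : R[X] := (oneSubDeriv ^ H) (Lagrange.nodal univ s)

theorem valuePoly_succ (H : ℕ) (s : ι → R) :
    valuePoly (H + 1) s = valuePoly H s - derivative (valuePoly H s) := by
  rw [valuePoly, pow_succ', Module.End.mul_apply, oneSubDeriv_apply, valuePoly]

theorem eval_valuePoly_succ {F : Type*} [Field F] [DecidableEq ι] {H : ℕ} {s a : ι → F} {x : F}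
    (ha : ∀ k, a k ≠ 0) (hx : ∀ k, (valuePoly H (s + Pi.single k (a k))).eval x = 0) :
    (valuePoly (H + 1) s).eval x = (valuePoly H s).eval x * (1 - ∑ k, (a k)⁻¹) := by
  have herase (k : ι) : ((oneSubDeriv ^ H) (Lagrange.nodal (univ.erase k) s)).eval x =
      (valuePoly H s).eval x * (a k)⁻¹ := by
    rw [eq_mul_inv_iff_mul_eq₀ (ha k), mul_comm]
    have h := hx k
    rw [valuePoly, nodal_add_single (mem_univ k), map_sub, map_smul, eval_sub, eval_smul,
      sub_eq_zero] at h
    exact h.symm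
  rw [valuePoly_succ, eval_sub, valuePoly, derivative_oneSubDeriv_pow, Lagrange.derivative_nodal,
    map_sum, eval_finsetSum, sum_congr rfl fun k _ => herase k, ← mul_sum, valuePoly]
  ring

end Polynomial

theorem exists_lt_deriv_of_nonpos_of_pos {f f' : ℝ → ℝ} {a b : ℝ} (hab : a < b)
    (hfc : ContinuousOn f (Set.Icc a b)) (hff' : ∀ x ∈ Set.Ioo a b, HasDerivAt f (f' x) x)
    (ha : f a ≤ 0) (hb : 0 < f b) : ∃ c ∈ Set.Ioo a b, f c < f' c := by
  have hd : ∀ x ∈ Set.Ioo a b, HasDerivAt (fun x => Real.exp (-x) * f x)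
      (Real.exp (-x) * (f' x - f x)) x := fun x hx =>
    ((hasDerivAt_neg x).exp.mul (hff' x hx)).congr_deriv (by ring)
  have hcont : ContinuousOn (fun x => Real.exp (-x) * f x) (Set.Icc a b) :=
    (by fun_prop : Continuous fun x : ℝ => Real.exp (-x)).continuousOn.mul hfc
  obtain ⟨c, hc, hslope⟩ := exists_hasDerivAt_eq_slope _ _ hab hcont hd
  have hrise : Real.exp (-a) * f a < Real.exp (-b) * f b :=
    (mul_nonpos_of_nonneg_of_nonpos (Real.exp_pos _).le ha).trans_lt (mul_pos (Real.exp_pos _) hb)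
  refine ⟨c, hc, sub_pos.1 (pos_of_mul_pos_right ?_ (Real.exp_pos (-c)).le)⟩
  exact hslope ▸ div_pos (sub_pos.2 hrise) (sub_pos.2 hab)

namespace IsValueFunction

section Root

variable {ι : Type*} [Fintype ι] {f : (ι → ℝ) → ℝ} {H : ℕ}

theorem exists_equalizing [DecidableEq ι] (hf : IsValueFunction f)
    (hroot : ∀ s, IsTopRoot (fun x => (valuePoly H s).eval x) (f s))
    {s : ι → ℝ} {x : ℝ} (hx : f s < x) :
    ∃ a : ι → ℝ, (∀ k, 0 < a k) ∧ (∀ k, f (s + Pi.single k (a k)) = x) ∧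
      (valuePoly (H + 1) s).eval x = (valuePoly H s).eval x * (1 - ∑ k, (a k)⁻¹) := by
  choose a ha hax using hf.exists_map_add_single_eq hx
  exact ⟨a, ha, hax, eval_valuePoly_succ (fun k => (ha k).ne') fun k => hax k ▸ (hroot _).eq_zero⟩

theorem eval_valuePoly_succ_nonneg [Nonempty ι] (hf : IsValueFunction f)
    (hroot : ∀ s, IsTopRoot (fun x => (valuePoly H s).eval x) (f s)) (s : ι → ℝ) :
    0 ≤ (valuePoly (H + 1) s).eval (f s + Fintype.card ι) := by
  classical
  have hcard : (0 : ℝ) < Fintype.card ι := Nat.cast_pos.2 Fintype.card_pos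
  have hlt : f s < f s + Fintype.card ι := lt_add_of_pos_right _ hcard
  obtain ⟨a, ha, hax, heval⟩ := hf.exists_equalizing hroot hlt
  have hsum : ∑ k, (a k)⁻¹ ≤ 1 := by
    calc ∑ k, (a k)⁻¹ ≤ ∑ _k : ι, (Fintype.card ι : ℝ)⁻¹ := by
          gcongr with k
          exact (add_le_add_iff_left (f s)).1 (hax k ▸ hf.map_add_single_le s k (ha k).le)
      _ = 1 := by simp [hcard.ne']
  rw [heval]
  exact mul_nonneg ((hroot s).pos_of_lt hlt).le (sub_nonneg.2 hsum)

theorem exists_eval_valuePoly_succ_eq_zero [Nonempty ι] (hf : IsValueFunction f)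
    (hroot : ∀ s, IsTopRoot (fun x => (valuePoly H s).eval x) (f s)) (s : ι → ℝ) :
    ∃ L, f s < L ∧ (valuePoly (H + 1) s).eval L = 0 := by
  obtain ⟨c, hc, hlt⟩ := exists_lt_deriv_of_nonpos_of_pos (lt_add_one (f s))
    (valuePoly H s).continuousOn (fun x _ => (valuePoly H s).hasDerivAt x)
    (hroot s).eq_zero.le ((hroot s).pos_of_lt (lt_add_one _))
  have hneg : (valuePoly (H + 1) s).eval c ≤ 0 := by
    rw [valuePoly_succ, eval_sub]
    exact (sub_neg.2 hlt).le
  have hcard : (1 : ℝ) ≤ Fintype.card ι := Nat.one_le_cast.2 Fintype.card_pos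
  obtain ⟨L, hL, hL0⟩ := intermediate_value_Icc (hc.2.le.trans (add_le_add_right hcard (f s)))
    (valuePoly (H + 1) s).continuousOn ⟨hneg, hf.eval_valuePoly_succ_nonneg hroot s⟩
  exact ⟨L, hc.1.trans_le hL.1, hL0⟩

end Root

theorem isTopRoot_bettingStep {K H : ℕ} [NeZero K] {f : (Fin K → ℝ) → ℝ} (hf : IsValueFunction f)
    (hroot : ∀ s, IsTopRoot (fun x => (valuePoly H s).eval x) (f s)) (s : Fin K → ℝ) :
    IsTopRoot (fun x => (valuePoly (H + 1) s).eval x) (bettingStep f s) := by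
  obtain ⟨L, hL, hL0⟩ := hf.exists_eval_valuePoly_succ_eq_zero hroot s
  obtain ⟨a, ha, haL, heval⟩ := hf.exists_equalizing hroot hL
  have hsum : ∑ k, (a k)⁻¹ = 1 := by
    rw [hL0, zero_eq_mul, or_iff_right ((hroot s).pos_of_lt hL).ne', sub_eq_zero] at heval
    exact heval.symm
  rw [hf.bettingStep_eq_of_equalizing ha hsum haL]
  refine ⟨hL0, fun y hy => ?_⟩
  obtain ⟨b, -, hby, heval_y⟩ := hf.exists_equalizing hroot (hL.trans hy)
  have hab (k : Fin K) : a k < b k := by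
    have hmono : Monotone fun c : ℝ => f (s + Pi.single k c) := fun c d hcd =>
      hf.monotone (by gcongr)
    exact hmono.reflect_lt (by simpa only [haL k, hby k])
  rw [heval_y, ← hsum]
  refine mul_pos ((hroot s).pos_of_lt (hL.trans hy)) (sub_pos.2 ?_)
  exact sum_lt_sum_of_nonempty univ_nonempty fun k _ => inv_strictAnti₀ (ha k) (hab k)

end IsValueFunction

theorem isTopRoot_eval_nodal {ι : Type*} [Fintype ι] [Nonempty ι] (s : ι → ℝ) :
    IsTopRoot (fun x => (Lagrange.nodal univ s).eval x) (⨆ k, s k) where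
  eq_zero := by
    obtain ⟨k, hk⟩ := exists_eq_ciSup_of_finite (f := s)
    exact hk ▸ Lagrange.eval_nodal_at_node (mem_univ k)
  pos_of_lt y hy := by
    rw [Lagrange.eval_nodal]
    exact prod_pos fun k _ =>
      sub_pos.2 ((le_ciSup (Set.finite_range s).bddAbove k).trans_lt hy)

theorem isTopRoot_V (K : ℕ) [NeZero K] (H : ℕ) (s : Fin K → ℝ) :
    IsTopRoot (fun x => (valuePoly H s).eval x) (V K H s) := by
  induction H generalizing s with
  | zero => exact isTopRoot_eval_nodal s
  | succ H ih =>
    have hf := isValueFunction_V K H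
    exact V_succ_of_convexOn hf.convexOn ▸ hf.isTopRoot_bettingStep ih s

/-! ### Largest roots of Appell sequences -/

/-- An Appell sequence: `p 0 = 1` and `p (n + 1)' = (n + 1) * p n`. -/
structure IsAppell (p : ℕ → ℝ → ℝ) : Prop where
  zero : ∀ x, p 0 x = 1
  hasDerivAt_succ : ∀ n x, HasDerivAt (p (n + 1)) ((n + 1) * p n x) x

namespace IsAppell

variable {p : ℕ → ℝ → ℝ} {n : ℕ} {b : ℝ}

theorem strictMonoOn_of_pos (hp : IsAppell p) (hpos : ∀ x, b < x → 0 < p n x) :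
    StrictMonoOn (p (n + 1)) (Set.Ici b) := by
  refine strictMonoOn_of_deriv_pos (convex_Ici b)
    (fun x _ => (hp.hasDerivAt_succ n x).continuousAt.continuousWithinAt) fun x hx => ?_
  rw [interior_Ici] at hx
  rw [(hp.hasDerivAt_succ n x).deriv]
  exact mul_pos n.cast_add_one_pos (hpos x hx)

theorem pos_of_le (hp : IsAppell p) (hpos : ∀ j ≤ n, 0 < p j b) {x : ℝ} (hx : b ≤ x) :
    0 < p n x := by
  induction n generalizing x with
  | zero => exact hp.zero x ▸ one_pos
  | succ n ih =>
    have hmono := hp.strictMonoOn_of_pos fun y hy => ih (fun j hj => hpos j (by omega)) hy.le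
    exact (hpos (n + 1) le_rfl).trans_le (hmono.monotoneOn Set.self_mem_Ici hx hx)

theorem isTopRoot (hp : IsAppell p) (hpos : ∀ j ≤ n, 0 < p j b) (hb : p (n + 1) b = 0) :
    IsTopRoot (p (n + 1)) b where
  eq_zero := hb
  pos_of_lt _ hy :=
    hb ▸ hp.strictMonoOn_of_pos (fun _ hx => hp.pos_of_le hpos hx.le) Set.self_mem_Ici hy.le hy

theorem exists_neg_of_lt (hp : IsAppell p) (hpos : 0 < p n b) (hb : p (n + 1) b = 0) {a : ℝ}
    (ha : a < b) : ∃ x, a < x ∧ p (n + 1) x < 0 := by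
  have hderiv : 0 < deriv (p (n + 1)) b := by
    rw [(hp.hasDerivAt_succ n b).deriv]
    exact mul_pos n.cast_add_one_pos hpos
  have hsign := (eventually_nhdsWithin_sign_eq_of_deriv_pos hderiv hb).filter_mono
    (nhdsWithin_le_nhds (s := Set.Iio b))
  obtain ⟨x, hx, hax, hxb⟩ := (hsign.and (Ioo_mem_nhdsLT ha)).exists
  refine ⟨x, hax, ?_⟩
  rwa [sign_neg (sub_neg.2 hxb), sign_eq_neg_one_iff] at hx

theorem tendsto_of_isTopRoot {α : Type*} {l : Filter α} {q : α → ℕ → ℝ → ℝ} {v : α → ℝ}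
    (hp : IsAppell p) (hpos : ∀ j ≤ n, 0 < p j b) (hb : p (n + 1) b = 0)
    (hq : ∀ᶠ i in l, IsAppell (q i)) (hv : ∀ᶠ i in l, IsTopRoot (q i (n + 1)) (v i))
    (hlim : ∀ j x, Tendsto (fun i => q i j x) l (𝓝 (p j x))) : Tendsto v l (𝓝 b) := by
  refine tendsto_order.2 ⟨fun a ha => ?_, fun a ha => ?_⟩
  · obtain ⟨x, hax, hx⟩ := hp.exists_neg_of_lt (hpos n le_rfl) hb ha
    filter_upwards [hv, (hlim (n + 1) x).eventually_lt_const hx] with i hvi hneg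
    exact hax.trans_le (not_lt.1 fun h => (hvi.pos_of_lt h).not_gt hneg)
  · have hposa : ∀ j ≤ n + 1, 0 < p j a := fun j hj => by
      rcases Nat.le_succ_iff.1 hj with hj | rfl
      · exact hp.pos_of_le (fun i hi => hpos i (hi.trans hj)) ha.le
      · exact (hp.isTopRoot hpos hb).pos_of_lt ha
    have hqpos : ∀ᶠ i in l, ∀ j ∈ Set.Iic (n + 1), 0 < q i j a :=
      (eventually_all_finite (Set.finite_Iic (n + 1))).2 fun j hj =>
        (hlim j a).eventually_const_lt (hposa j hj)
    filter_upwards [hq, hv, hqpos] with i hqi hvi hposi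
    exact not_le.1 fun h => (hqi.pos_of_le hposi h).ne' hvi.eq_zero

end IsAppell

/-! ### Hermite polynomials -/

theorem derivative_hermite_succ (n : ℕ) :
    derivative (hermite (n + 1)) = ((n : ℤ[X]) + 1) * hermite n := by
  induction n with
  | zero => simp
  | succ n ih =>
    have hder : derivative (((n : ℤ[X]) + 1) * hermite n) =
        ((n : ℤ[X]) + 1) * derivative (hermite n) := by simp
    rw [hermite_succ (n + 1), derivative_sub, derivative_mul, derivative_X, ih, hder, Nat.cast_succ]
    linear_combination (-((n : ℤ[X]) + 1)) * hermite_succ n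

theorem He_zero (x : ℝ) : He 0 x = 1 := by simp [He]

theorem He_one (x : ℝ) : He 1 x = x := by simp [He]

theorem He_add_two (n : ℕ) (x : ℝ) : He (n + 2) x = x * He (n + 1) x - (n + 1) * He n x := by
  simp only [He]
  rw [hermite_succ (n + 1), derivative_hermite_succ]
  simp

theorem isAppell_He : IsAppell He where
  zero := He_zero
  hasDerivAt_succ n x := by
    have h := (hermite (n + 1)).hasDerivAt_aeval x
    simp only [derivative_hermite_succ, map_mul, map_add, map_natCast, map_one] at h
    exact h

theorem tendsto_He_succ_atTop (n : ℕ) : Tendsto (He (n + 1)) atTop atTop := by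
  have hmonic := (hermite_monic (n + 1)).map (Int.castRingHom ℝ)
  have heval : He (n + 1) = fun x => ((hermite (n + 1)).map (Int.castRingHom ℝ)).eval x :=
    funext fun x => (eval_map_algebraMap (hermite (n + 1)) x).symm
  rw [heval]
  refine tendsto_atTop_of_leadingCoeff_nonneg _ ?_ (hmonic.leadingCoeff ▸ zero_le_one)
  rw [(hermite_monic _).degree_map, degree_hermite]
  exact_mod_cast n.succ_pos

theorem exists_He_succ_eq_zero (n : ℕ) : ∃ β, He (n + 1) β = 0 ∧ ∀ j ≤ n, 0 < He j β := by
  induction n with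
  | zero =>
    refine ⟨0, He_one 0, fun j hj => ?_⟩
    rw [Nat.le_zero.1 hj, He_zero]
    exact one_pos
  | succ n ih =>
    obtain ⟨β, hβ, hpos⟩ := ih
    have hneg : He (n + 2) β < 0 := by
      rw [He_add_two, hβ, mul_zero, zero_sub, neg_lt_zero]
      exact mul_pos n.cast_add_one_pos (hpos n le_rfl)
    obtain ⟨M, hM, hβM⟩ := (((tendsto_He_succ_atTop (n + 1)).eventually_ge_atTop 0).and
      (eventually_ge_atTop β)).exists
    obtain ⟨γ, hγ, hγ0⟩ := intermediate_value_Icc hβM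
      (hermite (n + 2)).continuous_aeval.continuousOn ⟨hneg.le, hM⟩
    have hβγ : β < γ := hγ.1.lt_of_ne <| by
      rintro rfl
      exact hneg.ne hγ0
    refine ⟨γ, hγ0, fun j hj => ?_⟩
    rcases Nat.le_succ_iff.1 hj with hj | rfl
    · exact isAppell_He.pos_of_le (fun i hi => hpos i (hi.trans hj)) hγ.1
    · exact (isAppell_He.isTopRoot hpos hβ).pos_of_lt hβγ

/-! ### Asymptotics of `(1 - D) ^ T X ^ n` -/

section OneSubDerivMonomial

variable {R : Type*} [CommRing R]

theorem derivative_oneSubDeriv_pow_X_pow (T n : ℕ) :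
    derivative ((oneSubDeriv ^ T) (X ^ (n + 1) : R[X])) =
      C (n + 1 : R) * (oneSubDeriv ^ T) (X ^ n) := by
  rw [derivative_oneSubDeriv_pow, derivative_X_pow_succ, ← smul_eq_C_mul, map_smul, smul_eq_C_mul]

theorem oneSubDeriv_pow_one (T : ℕ) : (oneSubDeriv ^ T) (1 : R[X]) = 1 := by
  induction T with
  | zero => simp
  | succ T ih => rw [pow_succ', Module.End.mul_apply, ih, oneSubDeriv_apply]; simp

theorem oneSubDeriv_pow_X (T : ℕ) : (oneSubDeriv ^ T) (X : R[X]) = X - C (T : R) := by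
  induction T with
  | zero => simp
  | succ T ih =>
    rw [pow_succ', Module.End.mul_apply, ih, oneSubDeriv_apply, derivative_X_sub_C, sub_sub,
      Nat.cast_succ, C_add, C_1]

theorem oneSubDeriv_pow_X_pow_add_two (T n : ℕ) :
    (oneSubDeriv ^ T) (X ^ (n + 2) : R[X]) =
      (X + C (n + 1 - T : R)) * (oneSubDeriv ^ T) (X ^ (n + 1)) -
        C (n + 1 : R) * X * (oneSubDeriv ^ T) (X ^ n) := by
  induction T with
  | zero =>
    simp only [pow_zero, Module.End.one_apply, Nat.cast_zero, sub_zero]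
    ring
  | succ T ih =>
    have hderiv := derivative_oneSubDeriv_pow_X_pow (R := R) T n
    simp only [pow_succ' oneSubDeriv, Module.End.mul_apply, ih]
    simp only [oneSubDeriv_apply, derivative_mul, derivative_X, derivative_natCast, derivative_one,
      hderiv, Nat.cast_add, Nat.cast_one, map_add, map_sub, map_one, map_natCast]
    ring

end OneSubDerivMonomial

/-- The polynomial `(1 - D) ^ T X ^ n`, recentered at `T` and rescaled by `√T`. -/
def rescaledValue (T n : ℕ) (y : ℝ) : ℝ :=
  ((oneSubDeriv ^ T) (X ^ n)).eval (T + √T * y) / √T ^ n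

theorem isAppell_rescaledValue {T : ℕ} (hT : 0 < T) : IsAppell (rescaledValue T) where
  zero y := by simp [rescaledValue, oneSubDeriv_pow_one]
  hasDerivAt_succ n y := by
    have : √(T : ℝ) ≠ 0 := (Real.sqrt_pos.2 (Nat.cast_pos.2 hT)).ne'
    have haff : HasDerivAt (fun y : ℝ => T + √T * y) √T y := by
      simpa using ((hasDerivAt_id y).const_mul √(T : ℝ)).const_add (T : ℝ)
    refine ((((oneSubDeriv ^ T) (X ^ (n + 1))).hasDerivAt _).comp y haff).div_const (√T ^ (n + 1))
      |>.congr_deriv ?_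
    rw [derivative_oneSubDeriv_pow_X_pow, eval_mul, eval_C, rescaledValue]
    field_simp
    ring

theorem rescaledValue_add_two {T : ℕ} (hT : 0 < T) (n : ℕ) (y : ℝ) :
    rescaledValue T (n + 2) y =
      (y + (n + 1) * (√T)⁻¹) * rescaledValue T (n + 1) y -
        (n + 1) * (1 + y * (√T)⁻¹) * rescaledValue T n y := by
  have hs : 0 < √(T : ℝ) := Real.sqrt_pos.2 (Nat.cast_pos.2 hT)
  have hsq : (T : ℝ) = √T ^ 2 := (Real.sq_sqrt T.cast_nonneg).symm
  simp only [rescaledValue, oneSubDeriv_pow_X_pow_add_two, eval_sub, eval_mul, eval_add, eval_X,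
    eval_C]
  generalize eval (T + √T * y) ((oneSubDeriv ^ T) (X ^ (n + 1))) = u
  generalize eval (T + √T * y) ((oneSubDeriv ^ T) (X ^ n)) = v
  generalize √(T : ℝ) = r at *
  rw [hsq]
  field_simp
  ring

theorem tendsto_inv_sqrt_natCast_atTop : Tendsto (fun T : ℕ => (√(T : ℝ))⁻¹) atTop (𝓝 0) :=
  tendsto_inv_atTop_zero.comp (Real.tendsto_sqrt_atTop.comp tendsto_natCast_atTop_atTop)

theorem tendsto_rescaledValue (n : ℕ) (y : ℝ) :
    Tendsto (fun T => rescaledValue T n y) atTop (𝓝 (He n y)) := by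
  induction n using Nat.twoStepInduction with
  | zero =>
    refine tendsto_const_nhds.congr' ?_
    filter_upwards [eventually_gt_atTop 0] with T hT
    rw [He_zero, (isAppell_rescaledValue hT).zero]
  | one =>
    refine tendsto_const_nhds.congr' ?_
    filter_upwards [eventually_gt_atTop 0] with T hT
    have hs : √(T : ℝ) ≠ 0 := (Real.sqrt_pos.2 (Nat.cast_pos.2 hT)).ne'
    simp [rescaledValue, oneSubDeriv_pow_X, He_one, hs]
  | more n ih₀ ih₁ =>
    have hinv := tendsto_inv_sqrt_natCast_atTop
    have hlim := (((hinv.const_mul ((n : ℝ) + 1)).const_add y).mul ih₁).sub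
      ((((hinv.const_mul y).const_add 1).const_mul ((n : ℝ) + 1)).mul ih₀)
    simp only [mul_zero, add_zero, mul_one, ← He_add_two] at hlim
    refine hlim.congr' ?_
    filter_upwards [eventually_gt_atTop 0] with T hT
    exact (rescaledValue_add_two hT n y).symm

theorem isTopRoot_rescaledValue (K : ℕ) [NeZero K] {T : ℕ} (hT : 0 < T) :
    IsTopRoot (rescaledValue T K) ((V K T 0 - T) / √T) := by
  have hs : 0 < √(T : ℝ) := Real.sqrt_pos.2 (Nat.cast_pos.2 hT)
  have hpoly : valuePoly T (0 : Fin K → ℝ) = (oneSubDeriv ^ T) (X ^ K) := by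
    simp [valuePoly, Lagrange.nodal_eq]
  have hV := hpoly ▸ isTopRoot_V K T 0
  refine ⟨?_, fun y hy => div_pos (hV.pos_of_lt ?_) (pow_pos hs K)⟩
  · rw [rescaledValue, mul_div_cancel₀ _ hs.ne', add_sub_cancel, hV.eq_zero, zero_div]
  · rw [div_lt_iff₀ hs] at hy
    linarith

/-- The asymptotic regret factor `β_K = lim_T (V T 0 − T)/√T` exists and equals the
largest real root of the `K`-th probabilist's Hermite polynomial. -/
theorem asymptotic_regret_factor (K : ℕ) (hK : 1 ≤ K) :
    ∃ β : ℝ, (He K β = 0 ∧ ∀ x : ℝ, He K x = 0 → x ≤ β) ∧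
      Filter.Tendsto (fun T : ℕ => (V K T 0 - (T : ℝ)) / Real.sqrt T)
        Filter.atTop (nhds β) := by
  have : NeZero K := ⟨Nat.one_le_iff_ne_zero.1 hK⟩
  obtain ⟨n, rfl⟩ := Nat.exists_eq_add_of_le' hK
  obtain ⟨β, hβ, hpos⟩ := exists_He_succ_eq_zero n
  have hpositive : ∀ᶠ T : ℕ in atTop, 0 < T := eventually_gt_atTop 0
  exact ⟨β, ⟨hβ, fun _ => (isAppell_He.isTopRoot hpos hβ).le_of_eq_zero⟩,
    isAppell_He.tendsto_of_isTopRoot hpos hβ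
      (hpositive.mono fun _ => isAppell_rescaledValue)
      (hpositive.mono fun _ => isTopRoot_rescaledValue (n + 1))
      tendsto_rescaledValue⟩
end
end

section
/- For all integers K ≥ 1, H ≥ 1 and every s : Fin K → ℝ, let v = (V H s)·𝟏 − s and define r : Fin K → ℝ by r k = D_{H−1,K−1}(v⁻ᵏ) / D_{H−1,K}(v). Then r ∈ Δ°_K (all coordinates are strictly positive and sum to 1), and for every k ∈ Fin K one has V (H−1) (s + (1/(r k))·e_k) = V H s. -/
open scoped BigOperators

noncomputable section

/-- Rising factorial `a^{(j)} = a (a+1) ⋯ (a+j-1)`. -/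
def rise (a : ℝ) (j : ℕ) : ℝ := ∏ i ∈ Finset.range j, (a + i)

/-- Elementary symmetric polynomial of degree `m` in the coordinates of `v`. -/
def esymm {K : ℕ} (m : ℕ) (v : Fin K → ℝ) : ℝ :=
  ∑ S ∈ Finset.univ.powersetCard m, ∏ k ∈ S, v k

/-- `D_{H,K}(v) = ∑_{m=0}^K (−H)^{(K−m)} σ_m(v)`. -/
def D (H K : ℕ) (v : Fin K → ℝ) : ℝ :=
  ∑ m ∈ Finset.range (K + 1), rise (-(H : ℝ)) (K - m) * esymm m v

/-!
Let `T = 1 - d/dx` and let `P_h(s) = T^h ∏_k (X - s_k)`, so that `D_{h,K}(x·𝟏 - s)` is the value of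
`P_h(s)` at `x`. Then `V h s` is the largest root of `P_h(s)`, by induction on `h`. Raising `s_k`
by `t` subtracts `t` times the minor `P_h(s⁻ᵏ)` from `P_h(s)`. As `T` preserves real-rootedness,
Laguerre's inequality bounds the Wronskian of `P_h(s⁻ᵏ)` and `P_h(s)` below by `P_h(s⁻ᵏ)²`, so the
odds `r_k(x) = P_h(s⁻ᵏ)(x) / P_h(s)(x)` are positive and decreasing beyond the largest root of
`P_h(s)`. Hence `x` is the largest root of the polynomial of `s + e_k / r_k(x)`, for every `k` at
once. The sum of the odds is `P_h(s)' / P_h(s)`, which is `1` exactly at the roots of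
`P_{h+1}(s) = P_h(s) - P_h(s)'`. Finally, odds that equalize the decisive bets are optimal: the
value function is convex, so its maximum over the bets is attained at a decisive one, and any
other odds in the simplex are at most as large in some coordinate.
-/
namespace OptimalOdds

open Polynomial

section OneSubDeriv

variable {R : Type*} [CommRing R]

/-- The operator `T = 1 - d/dx` on polynomials, which carries the polynomial of horizon `h` to the
one of horizon `h + 1`. -/
def oneSubDeriv (R : Type*) [CommRing R] : Module.End R R[X] := 1 - derivative

lemma oneSubDeriv_apply (p : R[X]) : oneSubDeriv R p = p - derivative p := rfl

lemma oneSubDeriv_pow_succ_apply (h : ℕ) (p : R[X]) :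
    (oneSubDeriv R ^ (h + 1)) p = (oneSubDeriv R ^ h) p - derivative ((oneSubDeriv R ^ h) p) := by
  rw [pow_succ', Module.End.mul_apply, oneSubDeriv_apply]

lemma derivative_oneSubDeriv_pow (h : ℕ) (p : R[X]) :
    derivative ((oneSubDeriv R ^ h) p) = (oneSubDeriv R ^ h) (derivative p) :=
  have commute : Commute (derivative : Module.End R R[X]) (oneSubDeriv R) :=
    (Commute.one_right _).sub_right (Commute.refl _)
  DFunLike.congr_fun (commute.pow_right h).eq p

lemma taylor_oneSubDeriv_pow (h : ℕ) (x : R) (p : R[X]) :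
    taylor x ((oneSubDeriv R ^ h) p) = (oneSubDeriv R ^ h) (taylor x p) := by
  induction h with
  | zero => rfl
  | succ h ih =>
    have taylor_derivative (q : R[X]) : taylor x (derivative q) = derivative (taylor x q) := by
      simp [taylor_apply, derivative_comp]
    rw [oneSubDeriv_pow_succ_apply, oneSubDeriv_pow_succ_apply, map_sub, taylor_derivative, ih]

lemma oneSubDeriv_X_sub_C_mul (a : R) (p : R[X]) :
    oneSubDeriv R ((X - C a) * p) = (X - C a) * oneSubDeriv R p - p := by
  simp only [oneSubDeriv_apply, derivative_mul, derivative_X_sub_C]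
  ring

lemma oneSubDeriv_pow_succ_X_sub_C_mul (h : ℕ) (a : R) (p : R[X]) :
    (oneSubDeriv R ^ (h + 1)) ((X - C a) * p) =
      (X - C a) * (oneSubDeriv R ^ (h + 1)) p - (h + 1) • (oneSubDeriv R ^ h) p := by
  induction h with
  | zero => simp [oneSubDeriv_X_sub_C_mul]
  | succ h ih =>
    rw [pow_succ', Module.End.mul_apply, ih, map_sub, oneSubDeriv_X_sub_C_mul, map_nsmul]
    simp only [← Module.End.mul_apply, ← pow_succ']
    rw [succ_nsmul _ (h + 1)]
    abel

lemma monic_oneSubDeriv_pow (h : ℕ) {p : R[X]} (hp : p.Monic) : ((oneSubDeriv R ^ h) p).Monic := by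
  nontriviality R
  induction h with
  | zero => exact hp
  | succ h ih =>
    rw [oneSubDeriv_pow_succ_apply]
    exact ih.sub_of_left (degree_derivative_lt ih.ne_zero)

end OneSubDeriv

section RealRooted

lemma im_sum_one_div_sub (z : ℂ) (m : Multiset ℝ) :
    (m.map fun a : ℝ => 1 / (z - a)).sum.im =
      -z.im * (m.map fun a : ℝ => (Complex.normSq (z - a))⁻¹).sum := by
  induction m using Multiset.induction with
  | empty => simp
  | cons a m ih =>
    rw [Multiset.map_cons, Multiset.map_cons, Multiset.sum_cons, Multiset.sum_cons,
      Complex.add_im, ih, one_div, Complex.inv_im, Complex.sub_im, Complex.ofReal_im]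
    ring

lemma im_sum_one_div_sub_ne_zero {z : ℂ} (hz : z.im ≠ 0) {m : Multiset ℝ} (hm : m ≠ 0) :
    (m.map fun a : ℝ => 1 / (z - a)).sum.im ≠ 0 := by
  have normSq_pos (a : ℝ) : 0 < Complex.normSq (z - a) :=
    Complex.normSq_pos.mpr fun h => hz (by simpa using congrArg Complex.im h)
  have sum_pos : 0 < (m.map fun a : ℝ => (Complex.normSq (z - a))⁻¹).sum := by
    simpa using Multiset.sum_lt_sum_of_nonempty (f := fun _ => (0 : ℝ)) hm
      fun a _ => inv_pos.mpr (normSq_pos a)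
  rw [im_sum_one_div_sub]
  exact mul_ne_zero (neg_ne_zero.mpr hz) sum_pos.ne'

lemma splits_sub_smul_derivative {p : ℝ[X]} (hp : p.Splits) (c : ℝ) :
    (p - c • derivative p).Splits := by
  rcases eq_or_ne p 0 with rfl | hp0
  · simp
  refine Splits.of_splits_map Complex.ofRealHom (IsAlgClosed.splits _) fun z hz => ?_
  by_contra hz_range
  have hz_im : z.im ≠ 0 := fun h => hz_range ⟨z.re, Complex.ext (by simp) (by simp [h])⟩
  have hpz : (p.map Complex.ofRealHom).eval z ≠ 0 := fun h =>
    hz_range (hp.mem_range_of_isRoot hp0 h)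
  have hroot : (p.map Complex.ofRealHom).eval z =
      c * (p.map Complex.ofRealHom).derivative.eval z := by
    simpa [sub_eq_zero] using (mem_roots'.mp hz).2
  have hlogDeriv : (c : ℂ) * (p.roots.map fun a : ℝ => 1 / (z - a)).sum = 1 := by
    have hderiv := (hp.map Complex.ofRealHom).eval_derivative_eq_eval_mul_sum hpz
    rw [hp.roots_map, Multiset.map_map] at hderiv
    refine mul_left_cancel₀ hpz ?_
    calc _ = c * (p.map Complex.ofRealHom).derivative.eval z := by
          rw [hderiv, mul_left_comm]
          rfl
      _ = (p.map Complex.ofRealHom).eval z * 1 := by rw [← hroot, mul_one]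
  have hroots : p.roots ≠ 0 := fun h => by simp [h] at hlogDeriv
  have hc : c ≠ 0 := fun h => by simp [h] at hlogDeriv
  have him := congrArg Complex.im hlogDeriv
  rw [Complex.im_ofReal_mul, Complex.one_im] at him
  exact mul_ne_zero hc (im_sum_one_div_sub_ne_zero hz_im hroots) him

lemma splits_oneSubDeriv_pow (h : ℕ) {p : ℝ[X]} (hp : p.Splits) :
    ((oneSubDeriv ℝ ^ h) p).Splits := by
  induction h with
  | zero => exact hp
  | succ h ih =>
    simpa only [oneSubDeriv_pow_succ_apply, one_smul] using splits_sub_smul_derivative ih 1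

lemma laguerre_inequality {p : ℝ[X]} (hp : p.Splits) (x : ℝ) :
    p.eval x * (derivative (derivative p)).eval x ≤ (derivative p).eval x ^ 2 := by
  obtain ⟨m, hm⟩ := splits_iff_exists_multiset.mp hp
  rw [hm]
  clear hm
  generalize p.leadingCoeff = c
  induction m using Multiset.induction with
  | empty => simp
  | cons a m ih =>
    rw [Multiset.map_cons, Multiset.prod_cons, mul_left_comm]
    generalize C c * (m.map fun a => X - C a).prod = q at ih ⊢
    have hdiff : (derivative ((X - C a) * q)).eval x ^ 2 -
          ((X - C a) * q).eval x * (derivative (derivative ((X - C a) * q))).eval x =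
        q.eval x ^ 2 + (x - a) ^ 2 *
          ((derivative q).eval x ^ 2 - q.eval x * (derivative (derivative q)).eval x) := by
      simp only [derivative_mul, derivative_add, derivative_X_sub_C, derivative_one, eval_mul,
        eval_add, eval_sub, eval_X, eval_C, eval_one, eval_zero]
      ring
    have := sub_nonneg.mpr ih
    rw [← sub_nonneg, hdiff]
    positivity

lemma sq_le_eval_wronskian_oneSubDeriv_pow (h : ℕ) (a : ℝ) {p : ℝ[X]} (hp : p.Splits) (x : ℝ) :
    ((oneSubDeriv ℝ ^ h) p).eval x ^ 2 ≤
      (wronskian ((oneSubDeriv ℝ ^ h) p) ((oneSubDeriv ℝ ^ h) ((X - C a) * p))).eval x := by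
  rcases h with _ | h
  · refine le_of_eq ?_
    simp only [pow_zero, Module.End.one_apply, wronskian, derivative_mul, derivative_X_sub_C,
      eval_sub, eval_mul, eval_add, eval_X, eval_C, eval_one]
    ring
  · rw [oneSubDeriv_pow_succ_X_sub_C_mul, oneSubDeriv_pow_succ_apply]
    have hlaguerre := sub_nonneg.mpr (laguerre_inequality (splits_oneSubDeriv_pow h hp) x)
    generalize (oneSubDeriv ℝ ^ h) p = q at hlaguerre ⊢
    have hdiff : (wronskian (q - derivative q)
          ((X - C a) * (q - derivative q) - (h + 1) • q)).eval x - (q - derivative q).eval x ^ 2 =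
        (h + 1) * ((derivative q).eval x ^ 2 - q.eval x * (derivative (derivative q)).eval x) := by
      simp only [wronskian, nsmul_eq_mul, derivative_sub, derivative_mul, derivative_X,
        derivative_C, derivative_natCast, eval_sub, eval_mul, eval_add, eval_X, eval_C, eval_one,
        eval_zero, eval_natCast]
      push_cast
      ring
    rw [← sub_nonneg, hdiff]
    positivity

end RealRooted

section LargestRoot

variable {f g : ℝ[X]} {a x : ℝ}

lemma exists_isGreatest_isRoot (hf : f ≠ 0) (hx : f.IsRoot x) :
    ∃ a, IsGreatest {y | f.IsRoot y} a :=
  (finite_setOfPred_isRoot hf).isCompact.exists_isGreatest ⟨x, hx⟩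

lemma eval_pos_of_isGreatest_isRoot (hf : f.Monic) (ha : IsGreatest {y | f.IsRoot y} a)
    (hx : a < x) : 0 < f.eval x :=
  zero_lt_eval_of_roots_lt_of_leadingCoeff_nonneg (fun _ hy => (ha.2 hy).trans_lt hx)
    (hf.leadingCoeff ▸ zero_le_one)

lemma hasDerivAt_eval_div_eval (hx : f.eval x ≠ 0) :
    HasDerivAt (fun y => g.eval y / f.eval y) (-(wronskian g f).eval x / f.eval x ^ 2) x :=
  ((g.hasDerivAt x).div (f.hasDerivAt x) hx).congr_deriv (by simp [wronskian])

lemma antitoneOn_eval_div_eval (hf : ∀ y, a < y → 0 < f.eval y)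
    (hw : ∀ y, a < y → 0 ≤ (wronskian g f).eval y) :
    AntitoneOn (fun y => g.eval y / f.eval y) (Set.Ioi a) := by
  have hderiv (y : ℝ) (hy : a < y) := hasDerivAt_eval_div_eval (g := g) (hf y hy).ne'
  refine antitoneOn_of_hasDerivWithinAt_nonpos (convex_Ioi a)
    (fun y hy => (hderiv y hy).continuousAt.continuousWithinAt)
    (fun y hy => (hderiv y (interior_subset hy)).hasDerivWithinAt) fun y hy => ?_
  exact div_nonpos_of_nonpos_of_nonneg (neg_nonpos.mpr (hw y (interior_subset hy))) (sq_nonneg _)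

lemma strictAntiOn_eval_div_eval (hf : ∀ y, a < y → 0 < f.eval y)
    (hw : ∀ y, a < y → 0 < (wronskian g f).eval y) :
    StrictAntiOn (fun y => g.eval y / f.eval y) (Set.Ioi a) := by
  have hderiv (y : ℝ) (hy : a < y) := hasDerivAt_eval_div_eval (g := g) (hf y hy).ne'
  refine strictAntiOn_of_hasDerivWithinAt_neg (convex_Ioi a)
    (fun y hy => (hderiv y hy).continuousAt.continuousWithinAt)
    (fun y hy => (hderiv y (interior_subset hy)).hasDerivWithinAt) fun y hy => ?_
  have hy : a < y := interior_subset hy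
  exact div_neg_of_neg_of_pos (neg_neg_of_pos (hw y hy)) (pow_pos (hf y hy) 2)

lemma eval_pos_of_wronskian_nonneg (hf : ∀ y, a < y → 0 < f.eval y) (hg : g.Monic)
    (hw : ∀ y, a < y → 0 ≤ (wronskian g f).eval y) (hx : a < x) : 0 < g.eval x := by
  refine zero_lt_eval_of_roots_lt_of_leadingCoeff_nonneg (fun y hy => ?_)
    (hg.leadingCoeff ▸ zero_le_one)
  by_contra! hxy
  obtain ⟨b, hb⟩ := exists_isGreatest_isRoot hg.ne_zero hy
  have hab : a < b := hx.trans_le (hxy.trans (hb.2 hy))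
  have hb1 : b < b + 1 := lt_add_one b
  have hratio := antitoneOn_eval_div_eval hf hw hab (hab.trans hb1) hb1.le
  simp only [hb.1.eq_zero, zero_div] at hratio
  exact hratio.not_gt
    (div_pos (eval_pos_of_isGreatest_isRoot hg hb hb1) (hf _ (hab.trans hb1)))

lemma exists_eval_lt_eval_derivative (hf : f.Monic) (ha : IsGreatest {y | f.IsRoot y} a) :
    ∃ x, a < x ∧ f.eval x < (derivative f).eval x := by
  -- Mean value theorem for `exp (-y) * f y`, which vanishes at `a` and is positive beyond it.
  have hderiv (y : ℝ) : HasDerivAt (fun y => Real.exp (-y) * f.eval y)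
      (Real.exp (-y) * ((derivative f).eval y - f.eval y)) y :=
    ((hasDerivAt_neg y).exp.mul (f.hasDerivAt y)).congr_deriv (by ring)
  obtain ⟨x, hx, hslope⟩ := exists_hasDerivAt_eq_slope _ _ (lt_add_one a)
    (fun y _ => (hderiv y).continuousAt.continuousWithinAt) fun y _ => hderiv y
  have hpos : 0 < f.eval (a + 1) := eval_pos_of_isGreatest_isRoot hf ha (lt_add_one a)
  rw [ha.1.eq_zero, mul_zero, sub_zero, add_sub_cancel_left, div_one] at hslope
  refine ⟨x, hx.1, sub_pos.mp (pos_of_mul_pos_right (a := Real.exp (-x)) ?_ (Real.exp_pos _).le)⟩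
  rw [hslope]
  positivity

lemma exists_isGreatest_isRoot_sub_derivative (hf : f.Monic)
    (ha : IsGreatest {y | f.IsRoot y} a) :
    ∃ x, a < x ∧ IsGreatest {y | (f - derivative f).IsRoot y} x := by
  obtain ⟨b, hab, hb⟩ := exists_eval_lt_eval_derivative hf ha
  have hmonic : (f - derivative f).Monic := hf.sub_of_left (degree_derivative_lt hf.ne_zero)
  obtain ⟨y, hy, hby⟩ : ∃ y, (f - derivative f).IsRoot y ∧ b ≤ y := by
    by_contra! hroots
    have := zero_lt_eval_of_roots_lt_of_leadingCoeff_nonneg hroots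
      (hmonic.leadingCoeff ▸ zero_le_one)
    rw [eval_sub] at this
    linarith
  obtain ⟨x, hx⟩ := exists_isGreatest_isRoot hmonic.ne_zero hy
  exact ⟨x, hab.trans_le (hby.trans (hx.2 hy)), hx⟩

lemma isGreatest_isRoot_sub_C_mul (hf : ∀ y, a < y → 0 < f.eval y)
    (hanti : StrictAntiOn (fun y => g.eval y / f.eval y) (Set.Ioi a)) (hx : a < x)
    (hgx : g.eval x ≠ 0) :
    IsGreatest {y | (f - C (f.eval x / g.eval x) * g).IsRoot y} x := by
  refine ⟨by simp [hgx], fun y hy => ?_⟩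
  by_contra! hxy
  have hy : f.eval y = f.eval x / g.eval x * g.eval y := by simpa [sub_eq_zero] using hy
  have hfx := (hf x hx).ne'
  have hfy := (hf y (hx.trans hxy)).ne'
  refine (hanti hx (hx.trans hxy) hxy).ne ?_
  rw [div_eq_div_iff hfy hfx, hy]
  field_simp

end LargestRoot

section OddsPoly

variable {R : Type*} [CommRing R]

/-- The polynomial in `x` whose value is `D h K (x·𝟏 - s)`, for any finite index type. -/
def oddsPoly {ι : Type*} [Fintype ι] (h : ℕ) (s : ι → R) : R[X] :=
  (oneSubDeriv R ^ h) (∏ k, (X - C (s k)))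

lemma oddsPoly_succ {ι : Type*} [Fintype ι] (h : ℕ) (s : ι → R) :
    oddsPoly (h + 1) s = oddsPoly h s - derivative (oddsPoly h s) :=
  oneSubDeriv_pow_succ_apply h _

lemma monic_oddsPoly {ι : Type*} [Fintype ι] (h : ℕ) (s : ι → R) : (oddsPoly h s).Monic :=
  monic_oneSubDeriv_pow h (monic_prod_X_sub_C s _)

lemma taylor_oddsPoly {ι : Type*} [Fintype ι] (h : ℕ) (x : R) (s : ι → R) :
    taylor x (oddsPoly h s) = oddsPoly h fun k => s k - x := by
  rw [oddsPoly, oddsPoly, taylor_oneSubDeriv_pow, taylor_apply, prod_comp]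
  refine congrArg _ (Finset.prod_congr rfl fun k _ => ?_)
  rw [sub_comp, X_comp, C_comp, C_sub]
  ring

lemma derivative_oddsPoly {n : ℕ} (h : ℕ) (s : Fin (n + 1) → R) :
    derivative (oddsPoly h s) = ∑ k : Fin (n + 1), oddsPoly h (s ∘ k.succAbove) := by
  rw [oddsPoly, derivative_oneSubDeriv_pow, derivative_prod_finset, map_sum]
  refine Finset.sum_congr rfl fun k _ => congrArg _ ?_
  rw [derivative_X_sub_C, mul_one, ← Finset.compl_singleton, ← Fin.image_succAbove_univ,
    Finset.prod_image k.succAbove_right_injective.injOn]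
  rfl

lemma oddsPoly_eq_oneSubDeriv_pow_mul {n : ℕ} (h : ℕ) (s : Fin (n + 1) → R) (k : Fin (n + 1)) :
    oddsPoly h s =
      (oneSubDeriv R ^ h) ((X - C (s k)) * ∏ i, (X - C ((s ∘ k.succAbove) i))) := by
  rw [oddsPoly, Fin.prod_univ_succAbove _ k]
  rfl

lemma oddsPoly_add_single {n : ℕ} (h : ℕ) (s : Fin (n + 1) → R) (k : Fin (n + 1)) (t : R) :
    oddsPoly h (s + Pi.single k t) = oddsPoly h s - C t * oddsPoly h (s ∘ k.succAbove) := by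
  have hminor : (s + Pi.single k t) ∘ k.succAbove = s ∘ k.succAbove := by
    ext i
    simp
  rw [oddsPoly_eq_oneSubDeriv_pow_mul h s k, oddsPoly_eq_oneSubDeriv_pow_mul h _ k, hminor,
    oddsPoly, ← smul_eq_C_mul, ← map_smul, ← map_sub, smul_eq_C_mul, Pi.add_apply,
    Pi.single_eq_same, C_add]
  ring_nf

lemma sq_le_eval_wronskian_oddsPoly {n : ℕ} (h : ℕ) (s : Fin (n + 1) → ℝ) (k : Fin (n + 1))
    (x : ℝ) :
    (oddsPoly h (s ∘ k.succAbove)).eval x ^ 2 ≤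
      (wronskian (oddsPoly h (s ∘ k.succAbove)) (oddsPoly h s)).eval x := by
  rw [oddsPoly_eq_oneSubDeriv_pow_mul h s k]
  exact sq_le_eval_wronskian_oneSubDeriv_pow h (s k) (Splits.prod fun _ _ => Splits.X_sub_C _) x

end OddsPoly

section RisingFactorial

lemma rise_succ_right (a : ℝ) (j : ℕ) : rise a (j + 1) = rise a j * (a + j) :=
  Finset.prod_range_succ _ _

lemma rise_succ_left (a : ℝ) (j : ℕ) : rise a (j + 1) = a * rise (a + 1) j := by
  simp only [rise, Finset.prod_range_succ', Nat.cast_zero, add_zero, Nat.cast_succ, mul_comm a,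
    add_right_comm a, add_assoc a]

lemma eval_zero_oneSubDeriv_pow_X_pow (h j : ℕ) :
    ((oneSubDeriv ℝ ^ h) (X ^ j)).eval 0 = rise (-h) j := by
  induction h generalizing j with
  | zero => cases j <;> simp [rise, Finset.prod_range_succ']
  | succ h ih =>
    rw [oneSubDeriv_pow_succ_apply, derivative_oneSubDeriv_pow, eval_sub, ih]
    rcases j with _ | j
    · simp [rise]
    · rw [derivative_X_pow, ← smul_eq_C_mul, map_smul, eval_smul, Nat.add_sub_cancel, ih,
        smul_eq_mul, Nat.cast_succ, Nat.cast_succ, rise_succ_left (-((h : ℝ) + 1)), rise_succ_right,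
        show -((h : ℝ) + 1) + 1 = -h by ring]
      ring

lemma prod_X_add_C_eq_sum_esymm {K : ℕ} (v : Fin K → ℝ) :
    ∏ k, (X + C (v k)) = ∑ m ∈ Finset.range (K + 1), esymm m v • X ^ (K - m) := by
  have := Multiset.prod_X_add_C_eq_sum_esymm ((Finset.univ : Finset (Fin K)).val.map v)
  simp only [Multiset.map_map, Multiset.card_map, Finset.card_val, Finset.card_univ,
    Fintype.card_fin, Finset.esymm_map_val, ← smul_eq_C_mul] at this
  exact this

lemma eval_oddsPoly_eq_D {K : ℕ} (h : ℕ) (s : Fin K → ℝ) (x : ℝ) :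
    (oddsPoly h s).eval x = D h K fun k => x - s k := by
  have htaylor : (oddsPoly h s).eval x = (oddsPoly h fun k => s k - x).eval 0 := by
    rw [← taylor_oddsPoly, taylor_eval, zero_add]
  have hprod : ∏ k, (X - C (s k - x)) = ∏ k, (X + C (x - s k)) := by
    simp only [sub_eq_add_neg X, ← C_neg, neg_sub]
  rw [htaylor, oddsPoly, hprod, prod_X_add_C_eq_sum_esymm, map_sum, eval_finsetSum, D]
  refine Finset.sum_congr rfl fun m _ => ?_
  rw [map_smul, eval_smul, eval_zero_oneSubDeriv_pow_X_pow, smul_eq_mul, mul_comm]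

end RisingFactorial

section Odds

variable {n h : ℕ} {s : Fin (n + 1) → ℝ} {a x : ℝ}

/-- The odds `r_k = D_{h,n}(v⁻ᵏ) / D_{h,n+1}(v)` as functions of the level `x`, where
`v = x·𝟏 - s`. -/
def odds (h : ℕ) (s : Fin (n + 1) → ℝ) (x : ℝ) (k : Fin (n + 1)) : ℝ :=
  (oddsPoly h (s ∘ k.succAbove)).eval x / (oddsPoly h s).eval x

lemma sum_odds (h : ℕ) (s : Fin (n + 1) → ℝ) (x : ℝ) :
    ∑ k, odds h s x k = (derivative (oddsPoly h s)).eval x / (oddsPoly h s).eval x := by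
  simp only [odds, derivative_oddsPoly, eval_finsetSum, Finset.sum_div]

lemma eval_oddsPoly_succAbove_pos (ha : IsGreatest {y | (oddsPoly h s).IsRoot y} a) (hx : a < x)
    (k : Fin (n + 1)) : 0 < (oddsPoly h (s ∘ k.succAbove)).eval x :=
  eval_pos_of_wronskian_nonneg (fun _ => eval_pos_of_isGreatest_isRoot (monic_oddsPoly h s) ha)
    (monic_oddsPoly h _)
    (fun y _ => (sq_nonneg _).trans (sq_le_eval_wronskian_oddsPoly h s k y)) hx

lemma strictAntiOn_odds (ha : IsGreatest {y | (oddsPoly h s).IsRoot y} a) (k : Fin (n + 1)) :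
    StrictAntiOn (fun y => odds h s y k) (Set.Ioi a) :=
  strictAntiOn_eval_div_eval (fun _ => eval_pos_of_isGreatest_isRoot (monic_oddsPoly h s) ha)
    fun y hy => (pow_pos (eval_oddsPoly_succAbove_pos ha hy k) 2).trans_le
      (sq_le_eval_wronskian_oddsPoly h s k y)

lemma odds_mem_simplexInt (ha : IsGreatest {y | (oddsPoly h s).IsRoot y} a) (hax : a < x)
    (hx : (oddsPoly (h + 1) s).IsRoot x) : odds h s x ∈ simplexInt (n + 1) := by
  have hpos := eval_pos_of_isGreatest_isRoot (monic_oddsPoly h s) ha hax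
  refine ⟨fun k => div_pos (eval_oddsPoly_succAbove_pos ha hax k) hpos, ?_⟩
  rw [oddsPoly_succ, IsRoot.def, eval_sub, sub_eq_zero] at hx
  rw [sum_odds, ← hx, div_self hpos.ne']

lemma isGreatest_isRoot_oddsPoly_add_single (ha : IsGreatest {y | (oddsPoly h s).IsRoot y} a)
    (hax : a < x) (k : Fin (n + 1)) :
    IsGreatest {y | (oddsPoly h (s + Pi.single k (1 / odds h s x k))).IsRoot y} x := by
  rw [oddsPoly_add_single, odds, one_div_div]
  exact isGreatest_isRoot_sub_C_mul
    (fun _ => eval_pos_of_isGreatest_isRoot (monic_oddsPoly h s) ha) (strictAntiOn_odds ha k) hax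
    (eval_oddsPoly_succAbove_pos ha hax k).ne'

end Odds

section ConvexEnvelopes

variable {E F : Type*} [AddCommMonoid E] [Module ℝ E] [AddCommMonoid F] [Module ℝ F]

lemma convexOn_iSup {ι : Type*} [Nonempty ι] {S : Set E} {f : ι → E → ℝ}
    (hf : ∀ i, ConvexOn ℝ S (f i)) (hbdd : ∀ x ∈ S, BddAbove (Set.range fun i => f i x)) :
    ConvexOn ℝ S fun x => ⨆ i, f i x := by
  refine ⟨(hf (Classical.arbitrary ι)).1, fun x hx y hy a b ha hb hab => ciSup_le fun i => ?_⟩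
  refine ((hf i).2 hx hy ha hb hab).trans (add_le_add ?_ ?_)
  · exact smul_le_smul_of_nonneg_left (le_ciSup (hbdd x hx) i) ha
  · exact smul_le_smul_of_nonneg_left (le_ciSup (hbdd y hy) i) hb

lemma convexOn_sInf_image {S : Set F} {f : E → F → ℝ}
    (hf : ConvexOn ℝ (Set.univ ×ˢ S) fun p : E × F => f p.1 p.2) (hS : S.Nonempty)
    (hbdd : ∀ x, BddBelow (f x '' S)) :
    ConvexOn ℝ Set.univ fun x => sInf (f x '' S) := by
  refine ⟨convex_univ, fun x _ y _ a b ha hb hab => le_of_forall_pos_le_add fun ε hε => ?_⟩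
  obtain ⟨_, ⟨u, hu, rfl⟩, hxu⟩ := Real.lt_sInf_add_pos (hS.image (f x)) hε
  obtain ⟨_, ⟨w, hw, rfl⟩, hyw⟩ := Real.lt_sInf_add_pos (hS.image (f y)) hε
  have hxu_mem : (x, u) ∈ Set.univ ×ˢ S := ⟨trivial, hu⟩
  have hyw_mem : (y, w) ∈ Set.univ ×ˢ S := ⟨trivial, hw⟩
  calc sInf (f (a • x + b • y) '' S) ≤ f (a • x + b • y) (a • u + b • w) :=
        csInf_le (hbdd _) ⟨_, (hf.1 hxu_mem hyw_mem ha hb hab).2, rfl⟩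
    _ ≤ a • f x u + b • f y w := hf.2 hxu_mem hyw_mem ha hb hab
    _ ≤ a • (sInf (f x '' S) + ε) + b • (sInf (f y '' S) + ε) := by gcongr
    _ = a • sInf (f x '' S) + b • sInf (f y '' S) + ε := by
        simp only [smul_eq_mul]
        linear_combination ε * hab

end ConvexEnvelopes

section ValueFunction

variable {K : ℕ} {W : (Fin K → ℝ) → ℝ} {s t r : Fin K → ℝ}

lemma simplexInt_nonempty (K : ℕ) [NeZero K] : (simplexInt K).Nonempty :=
  ⟨fun _ => (K : ℝ)⁻¹, fun _ => inv_pos.mpr (Nat.cast_pos.mpr (NeZero.pos K)),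
    by simp [NeZero.ne K]⟩

lemma convex_simplexInt (K : ℕ) : Convex ℝ (simplexInt K) := by
  intro r hr u hu a b ha hb hab
  refine ⟨fun k => convex_Ioi (0 : ℝ) (hr.1 k) (hu.1 k) ha hb hab, ?_⟩
  simp only [Pi.add_apply, Pi.smul_apply, smul_eq_mul, Finset.sum_add_distrib, ← Finset.mul_sum,
    hr.2, hu.2, mul_one, hab]

lemma single_mem_simplex (k : Fin K) : Pi.single k 1 ∈ simplex K :=
  single_mem_stdSimplex ℝ k

lemma le_one_of_mem_simplex {q : Fin K → ℝ} (hq : q ∈ simplex K) : q ≤ 1 :=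
  fun k => (mem_Icc_of_mem_stdSimplex hq k).2

lemma single_one_div (k : Fin K) (r : Fin K → ℝ) : Pi.single k 1 / r = Pi.single k (1 / r k) := by
  ext j
  rcases eq_or_ne j k with rfl | hj
  · simp
  · simp [hj]

lemma convexOn_add_div {q : Fin K → ℝ} (hq : 0 ≤ q) :
    ConvexOn ℝ (Set.univ ×ˢ simplexInt K) fun p : (Fin K → ℝ) × (Fin K → ℝ) => p.1 + q / p.2 := by
  refine ⟨convex_univ.prod (convex_simplexInt K), fun x hx y hy a b ha hb hab k => ?_⟩
  have hinv := (convexOn_zpow (𝕜 := ℝ) (-1)).2 (hx.2.1 k) (hy.2.1 k) ha hb hab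
  simp only [zpow_neg_one, smul_eq_mul] at hinv
  simp only [Prod.fst_add, Prod.snd_add, Prod.smul_fst, Prod.smul_snd, Pi.add_apply, Pi.mul_apply,
    Pi.inv_apply, Pi.smul_apply, smul_eq_mul, div_eq_mul_inv]
  linear_combination mul_le_mul_of_nonneg_left hinv (hq k)

/-- The supremum of the next value `W` over the bets `q ∈ Δ`, for the odds `r`. -/
def worstCase (W : (Fin K → ℝ) → ℝ) (s r : Fin K → ℝ) : ℝ :=
  sSup ((fun q => W (s + q / r)) '' simplex K)

/-- One step of the recursion for `V`, applied to an arbitrary next value `W`. -/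
def bellman (W : (Fin K → ℝ) → ℝ) (s : Fin K → ℝ) : ℝ :=
  sInf (worstCase W s '' simplexInt K)

lemma V_succ (K H : ℕ) : V K (H + 1) = bellman (V K H) := rfl

lemma le_bellman [NeZero K] {c : ℝ} (h : ∀ r ∈ simplexInt K, c ≤ worstCase W s r) :
    c ≤ bellman W s := by
  refine le_csInf ((simplexInt_nonempty K).image _) ?_
  rintro _ ⟨r, hr, rfl⟩
  exact h r hr

lemma bddAbove_worstCase (hW : Monotone W) (s : Fin K → ℝ) (hr : r ∈ simplexInt K) :
    BddAbove ((fun q => W (s + q / r)) '' simplex K) := by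
  refine ⟨W (s + 1 / r), ?_⟩
  rintro _ ⟨q, hq, rfl⟩
  refine hW (add_le_add_right (fun k => ?_) s)
  exact div_le_div_of_nonneg_right (le_one_of_mem_simplex hq k) (hr.1 k).le

lemma le_worstCase (hW : Monotone W) (s : Fin K → ℝ) {q : Fin K → ℝ} (hr : r ∈ simplexInt K)
    (hq : q ∈ simplex K) : W (s + q / r) ≤ worstCase W s r :=
  le_csSup (bddAbove_worstCase hW s hr) ⟨q, hq, rfl⟩

lemma worstCase_le [NeZero K] {c : ℝ} (h : ∀ q ∈ simplex K, W (s + q / r) ≤ c) :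
    worstCase W s r ≤ c := by
  refine csSup_le ⟨_, _, single_mem_simplex 0, rfl⟩ ?_
  rintro _ ⟨q, hq, rfl⟩
  exact h q hq

lemma worstCase_mono [NeZero K] (hW : Monotone W) (hr : r ∈ simplexInt K) (hst : s ≤ t) :
    worstCase W s r ≤ worstCase W t r :=
  worstCase_le fun _ hq => (hW (add_le_add_left hst _)).trans (le_worstCase hW t hr hq)

lemma apply_le_worstCase (hW : Monotone W) (hle : ∀ s k, s k ≤ W s) (s : Fin K → ℝ)
    (hr : r ∈ simplexInt K) (k : Fin K) : s k ≤ worstCase W s r :=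
  calc s k ≤ (s + Pi.single k (1 : ℝ) / r : Fin K → ℝ) k := by simpa using (hr.1 k).le
    _ ≤ W (s + Pi.single k 1 / r) := hle _ k
    _ ≤ worstCase W s r := le_worstCase hW s hr (single_mem_simplex k)

lemma convexOn_worstCase [NeZero K] (hW : Monotone W) (hconv : ConvexOn ℝ Set.univ W) :
    ConvexOn ℝ (Set.univ ×ˢ simplexInt K)
      fun p : (Fin K → ℝ) × (Fin K → ℝ) => worstCase W p.1 p.2 := by
  have : Nonempty (simplex K) := ⟨⟨_, single_mem_simplex 0⟩⟩
  simp only [worstCase, sSup_image']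
  refine convexOn_iSup (fun q => ?_) fun p hp => ?_
  · have hdiv := convexOn_add_div q.2.1
    exact ⟨hdiv.1, fun x hx y hy a b ha hb hab => (hW (hdiv.2 hx hy ha hb hab)).trans
      (hconv.2 trivial trivial ha hb hab)⟩
  · simpa only [Set.image_eq_range] using bddAbove_worstCase hW p.1 hp.2

/-- The properties of the value function that survive a step of the recursion: monotonicity and
the bound below keep the suprema and infima in it from taking junk values, and convexity reduces
the bets to the decisive ones. -/
structure IsValueLike (W : (Fin K → ℝ) → ℝ) : Prop where
  monotone : Monotone W
  apply_le : ∀ s k, s k ≤ W s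
  convexOn : ConvexOn ℝ Set.univ W

namespace IsValueLike

lemma bddBelow_worstCase [NeZero K] (hW : IsValueLike W) (s : Fin K → ℝ) :
    BddBelow (worstCase W s '' simplexInt K) := by
  refine ⟨s 0, ?_⟩
  rintro _ ⟨r, hr, rfl⟩
  exact apply_le_worstCase hW.monotone hW.apply_le s hr 0

lemma bellman_le [NeZero K] (hW : IsValueLike W) (s : Fin K → ℝ) (hr : r ∈ simplexInt K) :
    bellman W s ≤ worstCase W s r :=
  csInf_le (hW.bddBelow_worstCase s) ⟨r, hr, rfl⟩

lemma bellman [NeZero K] (hW : IsValueLike W) : IsValueLike (bellman W) where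
  monotone s _ hst := le_bellman fun _ hr =>
    (hW.bellman_le s hr).trans (worstCase_mono hW.monotone hr hst)
  apply_le s k := le_bellman fun _ hr => apply_le_worstCase hW.monotone hW.apply_le s hr k
  convexOn := convexOn_sInf_image (convexOn_worstCase hW.monotone hW.convexOn)
    (simplexInt_nonempty K) hW.bddBelow_worstCase

end IsValueLike

lemma isValueLike_V [NeZero K] (H : ℕ) : IsValueLike (V K H) := by
  induction H with
  | zero =>
    have bddAbove (s : Fin K → ℝ) : BddAbove (Set.range s) := (Set.finite_range s).bddAbove
    exact
      { monotone := fun _ t hst => ciSup_mono (bddAbove t) hst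
        apply_le := fun s => le_ciSup (bddAbove s)
        convexOn := convexOn_iSup (fun k => (LinearMap.proj k).convexOn convex_univ)
          fun s _ => bddAbove s }
  | succ H ih => exact V_succ K H ▸ ih.bellman

lemma add_div_eq_sum_smul {q : Fin K → ℝ} (hq : q ∈ simplex K) (s r : Fin K → ℝ) :
    s + q / r = ∑ k, q k • (s + Pi.single k (1 / r k)) := by
  ext j
  simp [Finset.sum_add_distrib, ← Finset.sum_mul, hq.2, Pi.single_apply, div_eq_mul_inv]

lemma worstCase_le_of_equalizing [NeZero K] (hconv : ConvexOn ℝ Set.univ W) {x : ℝ}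
    (heq : ∀ k, W (s + Pi.single k (1 / r k)) = x) : worstCase W s r ≤ x :=
  worstCase_le fun q hq =>
    calc W (s + q / r) = W (∑ k, q k • (s + Pi.single k (1 / r k))) := by
          rw [add_div_eq_sum_smul hq]
      _ ≤ ∑ k, q k • W (s + Pi.single k (1 / r k)) :=
          hconv.map_sum_le (fun k _ => hq.1 k) hq.2 fun _ _ => trivial
      _ = x := by simp only [heq, ← Finset.sum_smul, hq.2, one_smul]

lemma le_worstCase_of_equalizing [NeZero K] (hW : Monotone W) {x : ℝ} (hr : r ∈ simplexInt K)
    (heq : ∀ k, W (s + Pi.single k (1 / r k)) = x) {u : Fin K → ℝ} (hu : u ∈ simplexInt K) :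
    x ≤ worstCase W s u := by
  obtain ⟨k, -, hk⟩ := Finset.exists_le_of_sum_le (Finset.univ_nonempty (α := Fin K))
    (hu.2.trans hr.2.symm).le
  calc x = W (s + Pi.single k (1 / r k)) := (heq k).symm
    _ ≤ W (s + Pi.single k (1 / u k)) := by
        refine hW (add_le_add_right (Pi.single_mono (i := k) ?_) s)
        exact one_div_le_one_div_of_le (hu.1 k) hk
    _ ≤ worstCase W s u := by
        rw [← single_one_div]
        exact le_worstCase hW s hu (single_mem_simplex k)

lemma bellman_eq_of_equalizing [NeZero K] (hW : IsValueLike W) {x : ℝ} (hr : r ∈ simplexInt K)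
    (heq : ∀ k, W (s + Pi.single k (1 / r k)) = x) : bellman W s = x :=
  le_antisymm ((hW.bellman_le s hr).trans (worstCase_le_of_equalizing hW.convexOn heq))
    (le_bellman fun _ hu => le_worstCase_of_equalizing hW.monotone hr heq hu)

end ValueFunction

section LargestRootValue

variable {n : ℕ}

lemma isGreatest_isRoot_oddsPoly_zero (s : Fin (n + 1) → ℝ) :
    IsGreatest {y | (oddsPoly 0 s).IsRoot y} (V (n + 1) 0 s) := by
  have hroots : {y | (oddsPoly 0 s).IsRoot y} = Set.range s := by
    ext y
    simp [oddsPoly, IsRoot.def, eval_prod, Finset.prod_eq_zero_iff, sub_eq_zero, eq_comm (a := y)]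
  rw [hroots]
  exact ⟨Set.mem_range.mpr exists_eq_ciSup_of_finite, Set.forall_mem_range.mpr
    (le_ciSup (Set.finite_range s).bddAbove)⟩

lemma isGreatest_isRoot_oddsPoly_V (h : ℕ) (s : Fin (n + 1) → ℝ) :
    IsGreatest {y | (oddsPoly h s).IsRoot y} (V (n + 1) h s) := by
  induction h generalizing s with
  | zero => exact isGreatest_isRoot_oddsPoly_zero s
  | succ h ih =>
    obtain ⟨x, hVx, hx⟩ := exists_isGreatest_isRoot_sub_derivative (monic_oddsPoly h s) (ih s)
    rw [← oddsPoly_succ] at hx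
    have hV : V (n + 1) (h + 1) s = x :=
      bellman_eq_of_equalizing (isValueLike_V h) (odds_mem_simplexInt (ih s) hVx hx.1)
        fun k => (ih _).unique (isGreatest_isRoot_oddsPoly_add_single (ih s) hVx k)
    rwa [hV]

lemma V_lt_V_succ (h : ℕ) (s : Fin (n + 1) → ℝ) : V (n + 1) h s < V (n + 1) (h + 1) s := by
  obtain ⟨x, hVx, hx⟩ := exists_isGreatest_isRoot_sub_derivative (monic_oddsPoly h s)
    (isGreatest_isRoot_oddsPoly_V h s)
  rw [← oddsPoly_succ] at hx
  rwa [(isGreatest_isRoot_oddsPoly_V (h + 1) s).unique hx]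

end LargestRootValue

end OptimalOdds

/-- With `v = (V H s)·𝟏 − s` the residual loss vector, the odds
`r k = D_{H−1,K−1}(v⁻ᵏ) / D_{H−1,K}(v)` form a point of the open simplex and
equalize the value function over all decisive bets. -/
theorem optimal_odds (K' H : ℕ) (hH : 1 ≤ H) (s : Fin (K' + 1) → ℝ)
    (v : Fin (K' + 1) → ℝ) (hv : v = fun k => V (K' + 1) H s - s k)
    (r : Fin (K' + 1) → ℝ)
    (hr : r = fun k => D (H - 1) K' (v ∘ k.succAbove) / D (H - 1) (K' + 1) v) :
    r ∈ simplexInt (K' + 1) ∧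
      ∀ k : Fin (K' + 1),
        V (K' + 1) (H - 1) (fun j => s j + (if j = k then 1 / r k else 0)) =
          V (K' + 1) H s := by
  obtain ⟨h, rfl⟩ := Nat.exists_eq_add_of_le' hH
  have hroot := OptimalOdds.isGreatest_isRoot_oddsPoly_V h s
  have hlt := OptimalOdds.V_lt_V_succ h s
  have hodds : r = OptimalOdds.odds h s (V (K' + 1) (h + 1) s) := by
    ext k
    simp only [hr, hv, OptimalOdds.odds, OptimalOdds.eval_oddsPoly_eq_D, Nat.add_sub_cancel]
    rfl
  subst hodds
  refine ⟨OptimalOdds.odds_mem_simplexInt hroot hlt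
    (OptimalOdds.isGreatest_isRoot_oddsPoly_V (h + 1) s).1, fun k => ?_⟩
  have hbet (t : ℝ) : (fun j => s j + if j = k then t else 0) = s + Pi.single k t := by
    ext j
    rw [Pi.add_apply, Pi.single_apply]
  rw [hbet]
  exact (OptimalOdds.isGreatest_isRoot_oddsPoly_V h _).unique
    (OptimalOdds.isGreatest_isRoot_oddsPoly_add_single hroot hlt k)
end
end
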